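/- (Symmetry of the Riemann field, Eq. LGS.2.) Suppose the connection D on U is g-compatible and symmetric (Γ x u v = Γ x v u for all x, u, v). Fix x ∈ U and let R_x be any bilinear form on the second exterior power ⋀²[ℝ] V satisfying R_x (a x ∧ b x, c x ∧ d x) = −⟪g x (ρ(a,b,c) x), d x⟫ for all vector fields a, b, c, d on U. Then R_x is a symmetric bilinear form: R_x (B, C) = R_x (C, B) for all B, C ∈ ⋀²[ℝ] V. -/

import Mathlib

open scoped RealInnerProductSpace

variable {V : Type*} [NormedAddCommGroup V] [InnerProductSpace ℝ V] [FiniteDimensional ℝ V]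

/-- A vector field on `U` is a smooth map `U → V`. -/
def IsVectorField (U : Set V) (X : V → V) : Prop := ContDiffOn ℝ (⊤ : ℕ∞) X U

/-- Directional derivative `(a·∂X)(x) = fderiv ℝ X x (a x)`. -/
noncomputable def dirD (a X : V → V) : V → V := fun x => fderiv ℝ X x (a x)

/-- Lie bracket `[a,b] = a·∂b − b·∂a`. -/
noncomputable def bracket (a b : V → V) : V → V := fun x => dirD a b x - dirD b a x

/-- Smoothness of a connection field `Γ`. -/
def IsConnection (U : Set V) (Γ : V → V →ₗ[ℝ] V →ₗ[ℝ] V) : Prop :=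
  ∀ u v : V, ContDiffOn ℝ (⊤ : ℕ∞) (fun x => Γ x u v) U

/-- Covariant derivative associated to the connection field `Γ`. -/
noncomputable def covD (Γ : V → V →ₗ[ℝ] V →ₗ[ℝ] V) (a X : V → V) : V → V :=
  fun x => fderiv ℝ X x (a x) + Γ x (a x) (X x)

/-- Curvature of an abstract covariant-derivative operator. -/
noncomputable def curvOf (Dop : (V → V) → (V → V) → (V → V)) (a b c : V → V) : V → V :=
  fun x => Dop a (Dop b c) x - Dop b (Dop a c) x - Dop (bracket a b) c x

/-- Curvature field `ρ(a,b,c) = D_a (D_b c) − D_b (D_a c) − D_{[a,b]} c`. -/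
noncomputable def curv (Γ : V → V →ₗ[ℝ] V →ₗ[ℝ] V) : (V → V) → (V → V) → (V → V) → V → V :=
  curvOf (covD Γ)

/-- A metric on `U`: smooth, pointwise self-adjoint and invertible. -/
def IsMetric (U : Set V) (g : V → V →ₗ[ℝ] V) : Prop :=
  (∀ u : V, ContDiffOn ℝ (⊤ : ℕ∞) (fun x => g x u) U) ∧
  ∀ x ∈ U, (∀ u v : V, ⟪g x u, v⟫ = ⟪u, g x v⟫) ∧ Function.Bijective (g x)

/-- Compatibility of an abstract covariant-derivative operator with the metric `g`:
`a·∂(X ·_g Y) = (D_a X) ·_g Y + X ·_g (D_a Y)` on `U`. -/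
def CompatibleD (U : Set V) (Dop : (V → V) → (V → V) → (V → V)) (g : V → V →ₗ[ℝ] V) : Prop :=
  ∀ a X Y : V → V, IsVectorField U a → IsVectorField U X → IsVectorField U Y →
    ∀ x ∈ U, fderiv ℝ (fun y => ⟪g y (X y), Y y⟫) x (a x) =
      ⟪g x (Dop a X x), Y x⟫ + ⟪g x (X x), Dop a Y x⟫

/-- Compatibility of the connection `Γ` with the metric `g`. -/
def Compatible (U : Set V) (Γ : V → V →ₗ[ℝ] V →ₗ[ℝ] V) (g : V → V →ₗ[ℝ] V) : Prop :=
  CompatibleD U (covD Γ) g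

/-- The wedge `u ∧ v` of two vectors, as an element of the second exterior power `⋀[ℝ]^2 V`. -/
noncomputable def wedge2 (u v : V) : ⋀[ℝ]^2 V :=
  ⟨ExteriorAlgebra.ιMulti ℝ 2 ![u, v], ExteriorAlgebra.ιMulti_range ℝ 2 (Set.mem_range_self _)⟩

/-!
For a torsion-free connection `D_b c - D_c b = [b, c]`. Hence the cyclic sum of
`D_a (D_b c) - D_b (D_a c) - D_{[a,b]} c` regroups as the cyclic sum of
`D_a [b, c] - D_{[b,c]} a = [a, [b, c]]`, which vanishes by the Jacobi identity. Transported to `R_x`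
by means of constant vector fields, this is a cyclic identity for `R_x (a ∧ b, c ∧ d)`, an expression
that is skew in `a, b` and in `c, d`; four instances of it combine to the pair symmetry
`R_x (a ∧ b, c ∧ d) = R_x (c ∧ d, a ∧ b)`, and wedges span `⋀[ℝ]^2 V`.
-/

section PairSymmetry

/- Write `S a b c d` for the cyclic sum over the first three slots. Modulo the two skew-symmetries,
`S a b c d + S b c d a - S c d a b - S d a b c` is `2 • (r a b c d - r c d a b)`. -/
theorem pair_symm_of_skew_of_cyclic {M N : Type*} [AddCommGroup N] (h2 : IsSMulRegular N (2 : ℕ))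
    {r : M → M → M → M → N} (skew_left : ∀ a b c d, r a b c d = -r b a c d)
    (skew_right : ∀ a b c d, r a b c d = -r a b d c)
    (cyclic : ∀ a b c d, r a b c d + r b c a d + r c a b d = 0) (a b c d : M) :
    r a b c d = r c d a b := by
  have swap_both (a b c d : M) : r a b c d = r b a d c := by
    rw [skew_left, skew_right, neg_neg]
  have abc : r a b c d + r b c a d + r c a b d = 0 := cyclic a b c d
  have bcd : -r b c a d + -r c d a b + r d b c a = 0 := by
    simpa only [← skew_right] using cyclic b c d a
  have cda : r c d a b + r d a c b + r c a b d = 0 := by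
    simpa only [swap_both c a b d] using cyclic c d a b
  have dab : -r d a c b + -r a b c d + r d b c a = 0 := by
    simpa only [← skew_right, swap_both d b c a] using cyclic d a b c
  have double : 2 • r a b c d = 2 • r c d a b := by
    linear_combination (norm := module) abc + bcd - cda - dab
  exact h2 double

variable {R M N : Type*} [CommRing R] [AddCommGroup M] [Module R M] [AddCommGroup N] [Module R N]

theorem ιMulti_two_swap (u v : M) :
    exteriorPower.ιMulti R 2 ![u, v] = -exteriorPower.ιMulti R 2 ![v, u] := by
  rw [← (exteriorPower.ιMulti R 2).map_swap ![v, u] (show (0 : Fin 2) ≠ 1 by decide)]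
  congr 1
  ext i
  fin_cases i <;> rfl

theorem exteriorSquare_bilin_symm_of_wedge (B : ⋀[R]^2 M →ₗ[R] ⋀[R]^2 M →ₗ[R] N)
    (h : ∀ a b c d : M,
      B (exteriorPower.ιMulti R 2 ![a, b]) (exteriorPower.ιMulti R 2 ![c, d]) =
        B (exteriorPower.ιMulti R 2 ![c, d]) (exteriorPower.ιMulti R 2 ![a, b]))
    (X Y : ⋀[R]^2 M) : B X Y = B Y X := by
  have eta (m : Fin 2 → M) : m = ![m 0, m 1] := List.ofFn_inj.mp rfl
  have flip_eq : B = B.flip := by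
    ext m n
    rw [eta m, eta n]
    exact h (m 0) (m 1) (n 0) (n 1)
  exact LinearMap.congr_fun₂ flip_eq X Y

theorem exteriorSquare_bilin_symm_of_cyclic (h2 : IsSMulRegular N (2 : ℕ))
    (B : ⋀[R]^2 M →ₗ[R] ⋀[R]^2 M →ₗ[R] N)
    (cyclic : ∀ a b c d : M,
      B (exteriorPower.ιMulti R 2 ![a, b]) (exteriorPower.ιMulti R 2 ![c, d]) +
        B (exteriorPower.ιMulti R 2 ![b, c]) (exteriorPower.ιMulti R 2 ![a, d]) +
        B (exteriorPower.ιMulti R 2 ![c, a]) (exteriorPower.ιMulti R 2 ![b, d]) = 0)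
    (X Y : ⋀[R]^2 M) : B X Y = B Y X := by
  refine exteriorSquare_bilin_symm_of_wedge B (pair_symm_of_skew_of_cyclic h2 ?_ ?_ cyclic) X Y
  · intro a b c d
    rw [ιMulti_two_swap a b, map_neg, LinearMap.neg_apply]
  · intro a b c d
    rw [ιMulti_two_swap c d, map_neg]

end PairSymmetry

theorem contDiffOn_linearMap_apply {𝕜 E F G : Type*} [NontriviallyNormedField 𝕜] [CompleteSpace 𝕜]
    [NormedAddCommGroup E] [NormedSpace 𝕜 E] [NormedAddCommGroup F] [NormedSpace 𝕜 F]
    [FiniteDimensional 𝕜 F] [NormedAddCommGroup G] [NormedSpace 𝕜 G] {n : WithTop ℕ∞}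
    {s : Set E} {L : E → F →ₗ[𝕜] G} {f : E → F} (hL : ∀ v, ContDiffOn 𝕜 n (fun y => L y v) s)
    (hf : ContDiffOn 𝕜 n f s) : ContDiffOn 𝕜 n (fun y => L y (f y)) s :=
  (contDiffOn_clm_apply (f := fun y => (L y).toContinuousLinearMap).mpr hL).clm_apply hf

section Bianchi

variable {U : Set V} {Γ : V → V →ₗ[ℝ] V →ₗ[ℝ] V} {a b c X Y : V → V} {x : V}

section

omit [FiniteDimensional ℝ V]

theorem IsVectorField.contDiffAt (hX : IsVectorField U X) (hU : IsOpen U) (hx : x ∈ U) :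
    ContDiffAt ℝ (⊤ : ℕ∞) X x :=
  ContDiffOn.contDiffAt hX (hU.mem_nhds hx)

theorem IsVectorField.dirD (ha : IsVectorField U a) (hX : IsVectorField U X) (hU : IsOpen U) :
    IsVectorField U (dirD a X) :=
  (ContDiffOn.fderiv_of_isOpen hX hU le_rfl).clm_apply ha

theorem bracket_swap (a b : V → V) : bracket a b = -bracket b a :=
  funext fun _ => VectorField.lieBracket_swap

theorem bracket_neg_right (a b : V → V) : bracket a (-b) = -bracket a b := by
  ext x
  simp only [bracket, dirD, fderiv_neg, Pi.neg_apply, neg_apply, map_neg]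
  abel

theorem bracket_jacobi (ha : ContDiffAt ℝ 2 a x) (hb : ContDiffAt ℝ 2 b x)
    (hc : ContDiffAt ℝ 2 c x) :
    bracket a (bracket b c) x + bracket b (bracket c a) x + bracket c (bracket a b) x = 0 := by
  have leibniz : bracket a (bracket b c) x =
      bracket (bracket a b) c x + bracket b (bracket a c) x :=
    VectorField.leibniz_identity_lieBracket minSmoothness_of_isRCLikeNormedField.le ha hb hc
  rw [leibniz, bracket_swap _ c, bracket_swap a c, bracket_neg_right, Pi.neg_apply, Pi.neg_apply]
  abel

theorem covD_sub_covD_swap (hsymm : ∀ u v : V, Γ x u v = Γ x v u) :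
    covD Γ a b x - covD Γ b a x = bracket a b x := by
  simp only [covD, bracket, dirD, hsymm (a x) (b x)]
  abel

theorem covD_sub (hX : DifferentiableAt ℝ X x) (hY : DifferentiableAt ℝ Y x) :
    covD Γ a (X - Y) x = covD Γ a X x - covD Γ a Y x := by
  simp only [covD, fderiv_sub hX hY, sub_apply, Pi.sub_apply, map_sub]
  abel

theorem covD_congr (h : X =ᶠ[nhds x] Y) : covD Γ a X x = covD Γ a Y x := by
  simp only [covD, h.fderiv_eq, h.eq_of_nhds]

end

theorem IsVectorField.covD (ha : IsVectorField U a) (hX : IsVectorField U X) (hU : IsOpen U)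
    (hΓ : IsConnection U Γ) : IsVectorField U (covD Γ a X) := by
  have hΓa (v : V) : ContDiffOn ℝ (⊤ : ℕ∞) (fun y => Γ y (a y) v) U :=
    contDiffOn_linearMap_apply (L := fun y => (Γ y).flip v) (fun u => hΓ u v) ha
  exact (ha.dirD hX hU).add (contDiffOn_linearMap_apply hΓa hX)

theorem covD_covD_sub_swap (hU : IsOpen U) (hΓ : IsConnection U Γ)
    (hsymm : ∀ y ∈ U, ∀ u v : V, Γ y u v = Γ y v u) (hx : x ∈ U)
    (hb : IsVectorField U b) (hc : IsVectorField U c) :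
    covD Γ a (covD Γ b c) x - covD Γ a (covD Γ c b) x = covD Γ a (bracket b c) x := by
  have differentiable {p q : V → V} (hp : IsVectorField U p) (hq : IsVectorField U q) :
      DifferentiableAt ℝ (covD Γ p q) x :=
    ((hp.covD hq hU hΓ).contDiffAt hU hx).differentiableAt (by simp)
  rw [← covD_sub (differentiable hb hc) (differentiable hc hb)]
  refine covD_congr ?_
  filter_upwards [hU.mem_nhds hx] with y hy using covD_sub_covD_swap (hsymm y hy)

theorem curv_bianchi (hU : IsOpen U) (hΓ : IsConnection U Γ)
    (hsymm : ∀ y ∈ U, ∀ u v : V, Γ y u v = Γ y v u) (hx : x ∈ U)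
    (ha : IsVectorField U a) (hb : IsVectorField U b) (hc : IsVectorField U c) :
    curv Γ a b c x + curv Γ b c a x + curv Γ c a b x = 0 := by
  have commute (p : V → V) {q r : V → V} (hq : IsVectorField U q) (hr : IsVectorField U r) :
      covD Γ p (covD Γ q r) x - covD Γ p (covD Γ r q) x - covD Γ (bracket q r) p x =
        bracket p (bracket q r) x := by
    rw [covD_covD_sub_swap hU hΓ hsymm hx hq hr, covD_sub_covD_swap (hsymm x hx)]
  have smooth {p : V → V} (hp : IsVectorField U p) : ContDiffAt ℝ 2 p x :=
    (hp.contDiffAt hU hx).of_le (by norm_cast)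
  calc curv Γ a b c x + curv Γ b c a x + curv Γ c a b x
      = bracket a (bracket b c) x + bracket b (bracket c a) x + bracket c (bracket a b) x := by
        rw [← commute a hb hc, ← commute b hc ha, ← commute c ha hb]
        simp only [curv, curvOf]
        abel
    _ = 0 := bracket_jacobi (smooth ha) (smooth hb) (smooth hc)

end Bianchi

omit [FiniteDimensional ℝ V] in
theorem wedge2_eq_ιMulti (u v : V) : wedge2 u v = exteriorPower.ιMulti ℝ 2 ![u, v] := rfl

theorem riemann_field_symmetric_general {U : Set V} (hU : IsOpen U)
    {Γ : V → V →ₗ[ℝ] V →ₗ[ℝ] V} (hΓ : IsConnection U Γ)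
    (hsymm : ∀ x ∈ U, ∀ u v : V, Γ x u v = Γ x v u) {x : V} (hx : x ∈ U)
    (β : LinearMap.BilinForm ℝ V) (Rx : (⋀[ℝ]^2 V) →ₗ[ℝ] (⋀[ℝ]^2 V) →ₗ[ℝ] ℝ)
    (hRx : ∀ a b c d : V → V, IsVectorField U a → IsVectorField U b →
      IsVectorField U c → IsVectorField U d →
      Rx (wedge2 (a x) (b x)) (wedge2 (c x) (d x)) = β (curv Γ a b c x) (d x)) :
    ∀ B C : ⋀[ℝ]^2 V, Rx B C = Rx C B := by
  have const (v : V) : IsVectorField U fun _ => v := contDiffOn_const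
  have hR (a b c d : V) : Rx (wedge2 a b) (wedge2 c d) =
      β (curv Γ (fun _ => a) (fun _ => b) (fun _ => c) x) d :=
    hRx (fun _ => a) (fun _ => b) (fun _ => c) (fun _ => d)
      (const a) (const b) (const c) (const d)
  simp only [wedge2_eq_ιMulti] at hR
  refine exteriorSquare_bilin_symm_of_cyclic (IsAddTorsionFree.nsmul_right_injective two_ne_zero) Rx
    fun a b c d => ?_
  rw [hR, hR, hR, ← LinearMap.add_apply, ← LinearMap.add_apply, ← map_add, ← map_add,
    curv_bianchi hU hΓ hsymm hx (const a) (const b) (const c), map_zero, LinearMap.zero_apply]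

/-- Eq. (LGS.2): for a Levi-Civita structure, any bilinear form `R_x` on `⋀[ℝ]^2 V`
representing the curvature at `x ∈ U` is symmetric. -/
theorem riemann_field_symmetric
    (U : Set V) (hU : IsOpen U)
    (Γ : V → V →ₗ[ℝ] V →ₗ[ℝ] V) (hΓ : IsConnection U Γ)
    (g : V → V →ₗ[ℝ] V) (hg : IsMetric U g)
    (hcomp : Compatible U Γ g)
    (hsymm : ∀ x ∈ U, ∀ u v : V, Γ x u v = Γ x v u)
    (x : V) (hx : x ∈ U)
    (Rx : (⋀[ℝ]^2 V) →ₗ[ℝ] (⋀[ℝ]^2 V) →ₗ[ℝ] ℝ)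
    (hRx : ∀ a b c d : V → V, IsVectorField U a → IsVectorField U b →
      IsVectorField U c → IsVectorField U d →
      Rx (wedge2 (a x) (b x)) (wedge2 (c x) (d x)) = -⟪g x (curv Γ a b c x), d x⟫) :
    ∀ B C : ⋀[ℝ]^2 V, Rx B C = Rx C B :=
  riemann_field_symmetric_general hU hΓ hsymm hx (-(innerₗ V ∘ₗ g x)) Rx hRx
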